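/- Let n ≥ 1, let K ⊂ ℝⁿ be a convex body containing the origin in its interior, let M be an invertible n×n real matrix, and let x, ξ ∈ ℝⁿ be such that −ξ ∈ int(K°) and −x ∈ int((K°+ξ)°). Consider the (projective) map T(y) = M·(x + y/(1 + ⟨ξ, y⟩)). Then T(K) is a convex body containing the origin in its interior, and vp(T(K)) = vp((K°+ξ)° + x) = F_K(x, ξ). -/

import Mathlib

open MeasureTheory RealInnerProductSpace

noncomputable section

/-- The polar body `K° = {y | ⟨x, y⟩ ≤ 1 for all x ∈ K}`. -/
def polarBody {n : ℕ} (K : Set (EuclideanSpace ℝ (Fin n))) : Set (EuclideanSpace ℝ (Fin n)) :=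
  {y | ∀ x ∈ K, ⟪x, y⟫ ≤ 1}

/-- The volume product `vp(K) = |K| · |K°|`. -/
def vp {n : ℕ} (K : Set (EuclideanSpace ℝ (Fin n))) : ℝ :=
  (volume K).toReal * (volume (polarBody K)).toReal

/-- The barycenter `G_A = |A|⁻¹ ∫_A x dx`. -/
def bary {n : ℕ} (A : Set (EuclideanSpace ℝ (Fin n))) : EuclideanSpace ℝ (Fin n) :=
  (volume A).toReal⁻¹ • ∫ x in A, x

/-- The covariance matrix `cov(K)_{ij} = |K|⁻¹ ∫_K x_i x_j dx`. -/
def covM {n : ℕ} (K : Set (EuclideanSpace ℝ (Fin n))) : Matrix (Fin n) (Fin n) ℝ :=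
  Matrix.of fun i j => (volume K).toReal⁻¹ * ∫ x in K, x i * x j

/-- The functional `F_K(x, ξ) = vp((K° + ξ)° + x)`. -/
def FK {n : ℕ} (K : Set (EuclideanSpace ℝ (Fin n)))
    (p : EuclideanSpace ℝ (Fin n) × EuclideanSpace ℝ (Fin n)) : ℝ :=
  vp ((fun y => y + p.1) '' polarBody ((fun y => y + p.2) '' polarBody K))

/-!
The fractional linear map `y ↦ y / (1 + ⟪ξ, y⟫)` satisfies
`1 - ⟪w + ξ, y / (1 + ⟪ξ, y⟫)⟫ = (1 - ⟪w, y⟫) / (1 + ⟪ξ, y⟫)`, so wherever `1 + ⟪ξ, y⟫` is positive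
it turns the constraints `⟪w, y⟫ ≤ 1`, `w ∈ K°`, into the constraints defining `(K° + ξ)°`. By the
bipolar theorem it therefore maps `K` onto `(K° + ξ)°`, and `T(K)` is the image of `(K° + ξ)° + x`
under a linear isomorphism `L`. Since `(L A)° = (L*)⁻¹ A°`, the volumes of `A` and `A°` scale by
inverse factors and the volume product does not change.
-/

section FracMap

variable {E : Type*} [NormedAddCommGroup E] [InnerProductSpace ℝ E]

/-- The fractional linear map `y ↦ y / (1 + ⟪ξ, y⟫)`, by which translating the polar body by `ξ`
acts on the body itself. On the hyperplane `⟪ξ, y⟫ = -1` it takes the junk value `0`. -/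
def fracMap (ξ y : E) : E := (1 + ⟪ξ, y⟫)⁻¹ • y

lemma inner_add_fracMap_le_one_iff {ξ y : E} (hy : 0 < 1 + ⟪ξ, y⟫) (w : E) :
    ⟪w + ξ, fracMap ξ y⟫ ≤ 1 ↔ ⟪w, y⟫ ≤ 1 := by
  rw [fracMap, real_inner_smul_right, inner_add_left, inv_mul_le_iff₀ hy, mul_one]
  exact add_le_add_iff_right ⟪ξ, y⟫

lemma one_add_inner_fracMap_neg {ξ z : E} (hz : 1 - ⟪ξ, z⟫ ≠ 0) :
    1 + ⟪ξ, fracMap (-ξ) z⟫ = (1 - ⟪ξ, z⟫)⁻¹ := by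
  rw [fracMap, inner_neg_left, ← sub_eq_add_neg, real_inner_smul_right]
  field_simp
  ring

lemma fracMap_fracMap_neg {ξ z : E} (hz : 1 - ⟪ξ, z⟫ ≠ 0) :
    fracMap ξ (fracMap (-ξ) z) = z := by
  rw [fracMap, one_add_inner_fracMap_neg hz, inv_inv, fracMap, inner_neg_left, ← sub_eq_add_neg,
    smul_inv_smul₀ hz]

lemma continuousOn_fracMap (ξ : E) : ContinuousOn (fracMap ξ) {y | 1 + ⟪ξ, y⟫ ≠ 0} := by
  have hdenom : Continuous fun y : E => 1 + ⟪ξ, y⟫ := by fun_prop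
  exact (hdenom.continuousOn.inv₀ fun _ hy => hy).smul continuousOn_id

end FracMap

section PolarBody

variable {n : ℕ} {A K : Set (EuclideanSpace ℝ (Fin n))} {v y z ξ : EuclideanSpace ℝ (Fin n)}

lemma convex_polarBody (A : Set (EuclideanSpace ℝ (Fin n))) : Convex ℝ (polarBody A) := by
  intro y hy z hz s t hs ht hst a ha
  calc ⟪a, s • y + t • z⟫ = s * ⟪a, y⟫ + t * ⟪a, z⟫ := by
        rw [inner_add_right, real_inner_smul_right, real_inner_smul_right]
    _ ≤ s * 1 + t * 1 := by gcongr <;> [exact hy a ha; exact hz a ha]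
    _ = 1 := by rw [mul_one, mul_one, hst]

lemma subset_polarBody_polarBody (A : Set (EuclideanSpace ℝ (Fin n))) :
    A ⊆ polarBody (polarBody A) :=
  fun y hy w hw => real_inner_comm w y ▸ hw y hy

lemma polarBody_polarBody (hclosed : IsClosed A) (hconv : Convex ℝ A) (h0 : 0 ∈ A) :
    polarBody (polarBody A) = A := by
  refine (subset_polarBody_polarBody A).antisymm' fun y hy => ?_
  by_contra hyA
  obtain ⟨f, u, hfA, hfy⟩ := geometric_hahn_banach_closed_point hconv hclosed hyA
  have hu : 0 < u := by simpa only [map_zero] using hfA 0 h0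
  let w := u⁻¹ • (InnerProductSpace.toDual ℝ _).symm f
  have inner_w (a) : ⟪w, a⟫ = u⁻¹ * f a := by
    rw [real_inner_smul_left, InnerProductSpace.toDual_symm_apply]
  have hw : w ∈ polarBody A := fun a ha => by
    rw [real_inner_comm, inner_w, inv_mul_le_iff₀ hu, mul_one]
    exact (hfA a ha).le
  have hwy : ⟪w, y⟫ ≤ 1 := hy w hw
  rw [inner_w, inv_mul_le_iff₀ hu, mul_one] at hwy
  exact hfy.not_ge hwy

lemma zero_mem_interior_polarBody (hA : Bornology.IsBounded A) : 0 ∈ interior (polarBody A) := by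
  obtain ⟨R, hR, hAR⟩ := hA.exists_pos_norm_le
  rw [mem_interior_iff_mem_nhds]
  refine Filter.mem_of_superset (Metric.ball_mem_nhds 0 (inv_pos.mpr hR)) fun y hy a ha => ?_
  rw [mem_ball_zero_iff] at hy
  calc ⟪a, y⟫ ≤ ‖a‖ * ‖y‖ := real_inner_le_norm a y
    _ ≤ R * R⁻¹ := by gcongr; exact hAR a ha
    _ = 1 := mul_inv_cancel₀ hR.ne'

lemma inner_lt_one_of_mem_interior_of_mem_polarBody (hv : v ∈ interior A)
    (hz : z ∈ polarBody A) : ⟪v, z⟫ < 1 := by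
  have hlim : Filter.Tendsto (fun t : ℝ => t • v) (nhdsWithin 1 (Set.Ioi 1)) (nhds v) := by
    have hcont : Continuous fun t : ℝ => t • v := by fun_prop
    simpa only [one_smul] using (hcont.tendsto 1).mono_left nhdsWithin_le_nhds
  obtain ⟨t, htA, ht : 1 < t⟩ :=
    ((hlim.eventually (mem_interior_iff_mem_nhds.mp hv)).and self_mem_nhdsWithin).exists
  have hle : t * ⟪v, z⟫ ≤ 1 := real_inner_smul_left v z t ▸ hz _ htA
  nlinarith

lemma one_add_inner_pos (hξ : -ξ ∈ interior (polarBody K)) (hy : y ∈ K) : 0 < 1 + ⟪ξ, y⟫ := by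
  have hlt := inner_lt_one_of_mem_interior_of_mem_polarBody hξ (subset_polarBody_polarBody K hy)
  rw [inner_neg_left] at hlt
  linarith

lemma one_sub_inner_pos (hA : 0 ∈ interior A)
    (hz : z ∈ polarBody ((fun w => w + ξ) '' A)) : 0 < 1 - ⟪ξ, z⟫ := by
  have hξA : ξ ∈ interior ((fun w => w + ξ) '' A) :=
    (isOpenMap_add_right ξ).image_interior_subset A ⟨0, hA, zero_add ξ⟩
  exact sub_pos.mpr (inner_lt_one_of_mem_interior_of_mem_polarBody hξA hz)

theorem fracMap_image_eq_polarBody (hcomp : IsCompact K) (hconv : Convex ℝ K) (h0 : 0 ∈ K)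
    (hξ : -ξ ∈ interior (polarBody K)) :
    fracMap ξ '' K = polarBody ((fun w => w + ξ) '' polarBody K) := by
  apply Set.Subset.antisymm
  · rintro _ ⟨y, hy, rfl⟩ _ ⟨w, hw, rfl⟩
    exact (inner_add_fracMap_le_one_iff (one_add_inner_pos hξ hy) w).mpr
      (subset_polarBody_polarBody K hy w hw)
  · intro z hz
    have hz_pos : 0 < 1 - ⟪ξ, z⟫ :=
      one_sub_inner_pos (zero_mem_interior_polarBody hcomp.isBounded) hz
    have hinv : fracMap ξ (fracMap (-ξ) z) = z := fracMap_fracMap_neg hz_pos.ne'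
    have hpos : 0 < 1 + ⟪ξ, fracMap (-ξ) z⟫ :=
      one_add_inner_fracMap_neg hz_pos.ne' ▸ inv_pos.mpr hz_pos
    refine ⟨fracMap (-ξ) z, ?_, hinv⟩
    rw [← polarBody_polarBody hcomp.isClosed hconv h0]
    intro w hw
    rw [← inner_add_fracMap_le_one_iff hpos, hinv]
    exact hz _ ⟨w, hw, rfl⟩

lemma isCompact_fracMap_image (hK : IsCompact K) (hξ : -ξ ∈ interior (polarBody K)) :
    IsCompact (fracMap ξ '' K) :=
  hK.image_of_continuousOn <|
    (continuousOn_fracMap ξ).mono fun _ hy => (one_add_inner_pos hξ hy).ne'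

end PolarBody

section Adjoint

variable {𝕜 E : Type*} [RCLike 𝕜] [NormedAddCommGroup E] [InnerProductSpace 𝕜 E]
  [FiniteDimensional 𝕜 E]

lemma det_adjoint (f : E →ₗ[𝕜] E) :
    LinearMap.det (LinearMap.adjoint f) = star (LinearMap.det f) := by
  let b := stdOrthonormalBasis 𝕜 E
  rw [← LinearMap.det_toMatrix b.toBasis, ← LinearMap.det_toMatrix b.toBasis,
    LinearMap.toMatrix_adjoint, Matrix.det_conjTranspose]

end Adjoint

section VolumeProduct

variable {n : ℕ}

lemma polarBody_linearMap_image {m : ℕ}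
    (L : EuclideanSpace ℝ (Fin n) →ₗ[ℝ] EuclideanSpace ℝ (Fin m))
    (A : Set (EuclideanSpace ℝ (Fin n))) :
    polarBody (L '' A) = LinearMap.adjoint L ⁻¹' polarBody A := by
  ext y
  simp only [polarBody, Set.mem_ofPred_eq, Set.forall_mem_image, Set.mem_preimage,
    LinearMap.adjoint_inner_right]

theorem vp_linearEquiv_image (L : EuclideanSpace ℝ (Fin n) ≃ₗ[ℝ] EuclideanSpace ℝ (Fin n))
    (A : Set (EuclideanSpace ℝ (Fin n))) : vp (L '' A) = vp A := by
  have hdet : LinearMap.det (L : _ →ₗ[ℝ] EuclideanSpace ℝ (Fin n)) ≠ 0 := L.isUnit_det'.ne_zero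
  have hdet_adj : LinearMap.det (LinearMap.adjoint (L : _ →ₗ[ℝ] EuclideanSpace ℝ (Fin n))) ≠ 0 := by
    rwa [det_adjoint, star_trivial]
  have himage := Measure.addHaar_image_linearMap volume (L : _ →ₗ[ℝ] EuclideanSpace ℝ (Fin n)) A
  have hpolar := Measure.addHaar_preimage_linearMap volume hdet_adj (polarBody A)
  rw [← polarBody_linearMap_image, det_adjoint, star_trivial, abs_inv] at hpolar
  rw [LinearEquiv.coe_coe] at himage hpolar
  rw [vp, vp, himage, hpolar, ENNReal.toReal_mul, ENNReal.toReal_mul,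
    ENNReal.toReal_ofReal (abs_nonneg _), ENNReal.toReal_ofReal (inv_nonneg.mpr (abs_nonneg _)),
    mul_mul_mul_comm, mul_inv_cancel₀ (abs_ne_zero.mpr hdet), one_mul]

end VolumeProduct

theorem stmt11_general {n : ℕ} (K : Set (EuclideanSpace ℝ (Fin n)))
    (hKcomp : IsCompact K) (hKconv : Convex ℝ K) (hK0 : 0 ∈ K)
    (L : EuclideanSpace ℝ (Fin n) ≃ₗ[ℝ] EuclideanSpace ℝ (Fin n))
    (x ξ : EuclideanSpace ℝ (Fin n)) (hξ : -ξ ∈ interior (polarBody K))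
    (hx : -x ∈ interior (polarBody ((fun z => z + ξ) '' polarBody K)))
    (T : EuclideanSpace ℝ (Fin n) → EuclideanSpace ℝ (Fin n))
    (hT : ∀ y, T y = L (x + (1 + ⟪ξ, y⟫)⁻¹ • y)) :
    IsCompact (T '' K) ∧ Convex ℝ (T '' K) ∧ 0 ∈ interior (T '' K) ∧
      vp (T '' K) = vp ((fun z => z + x) '' polarBody ((fun z => z + ξ) '' polarBody K)) ∧
      vp (T '' K) = FK K (x, ξ) := by
  set B := polarBody ((fun z => z + ξ) '' polarBody K)
  have hB_image : fracMap ξ '' K = B := fracMap_image_eq_polarBody hKcomp hKconv hK0 hξ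
  have hTK : T '' K = L '' ((fun z => z + x) '' B) := by
    rw [← hB_image, Set.image_image, Set.image_image]
    exact Set.image_congr fun y _ => (hT y).trans (congrArg L (add_comm _ _))
  have hB_comp : IsCompact B := hB_image ▸ isCompact_fracMap_image hKcomp hξ
  have hB_conv : Convex ℝ ((fun z => z + x) '' B) := by
    simpa only [add_comm] using (convex_polarBody _).translate x
  have h0 : 0 ∈ interior ((fun z => z + x) '' B) :=
    (isOpenMap_add_right x).image_interior_subset B ⟨-x, hx, neg_add_cancel x⟩
  have hvp : vp (T '' K) = vp ((fun z => z + x) '' B) := by rw [hTK, vp_linearEquiv_image]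
  refine ⟨?_, ?_, ?_, hvp, hvp⟩ <;> rw [hTK]
  · exact (hB_comp.image (continuous_add_const x)).image L.toContinuousLinearEquiv.continuous
  · exact hB_conv.linear_image L.toLinearMap
  · exact L.toContinuousLinearEquiv.isOpenMap.image_interior_subset _ ⟨0, h0, map_zero L⟩

theorem stmt11 {n : ℕ} (hn : 1 ≤ n) (K : Set (EuclideanSpace ℝ (Fin n)))
    (hKcomp : IsCompact K) (hKconv : Convex ℝ K)
    (hK0 : (0 : EuclideanSpace ℝ (Fin n)) ∈ interior K)
    (M : Matrix (Fin n) (Fin n) ℝ) (hM : M.det ≠ 0)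
    (x ξ : EuclideanSpace ℝ (Fin n)) (hξ : -ξ ∈ interior (polarBody K))
    (hx : -x ∈ interior (polarBody ((fun z => z + ξ) '' polarBody K))) :
    ∀ T : EuclideanSpace ℝ (Fin n) → EuclideanSpace ℝ (Fin n),
      (∀ y, T y = (WithLp.toLp 2 (M.mulVec (x + (1 + ⟪ξ, y⟫)⁻¹ • y)) : EuclideanSpace ℝ (Fin n))) →
      IsCompact (T '' K) ∧ Convex ℝ (T '' K) ∧
        (0 : EuclideanSpace ℝ (Fin n)) ∈ interior (T '' K) ∧
        vp (T '' K) = vp ((fun z => z + x) '' polarBody ((fun z => z + ξ) '' polarBody K)) ∧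
        vp (T '' K) = FK K (x, ξ) := by
  intro T hT
  have hdet : LinearMap.det (Matrix.toEuclideanLin M) ≠ 0 := by rwa [LinearMap.det_toLpLin]
  exact stmt11_general K hKcomp hKconv (interior_subset hK0)
    (LinearMap.equivOfDetNeZero _ hdet) x ξ hξ hx T hT
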